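/- Let μ be a normalized n×n matrix measure on the unit circle 𝕋, let (supp μ)' denote the set of limit points of supp μ, and let f be the Schur function of μ, analytically continued through 𝕋 \ (supp μ)'. Then the isolated mass points λ of μ (i.e. isolated points λ of supp μ with μ({λ}) ≠ 0) are precisely the zeros of det(1ₙ − z f(z)) lying on 𝕋 \ (supp μ)', and for every such isolated mass point λ one has range μ({λ}) = ker(1ₙ − λ f(λ)). -/

import Mathlib

open Complex Filter Set Metric MeasureTheory
open scoped ComplexOrder

/-- An `n × n` matrix measure on the unit circle `𝕋 ⊆ ℂ`: a countably additive
assignment of positive semidefinite matrices to Borel sets, represented by a finite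
base measure concentrated on the circle together with a positive semidefinite
matrix-valued density (such a representation always exists, e.g. with respect to
the trace measure). -/
structure MatrixMeasure (n : ℕ) where
  base : Measure ℂ
  finite : IsFiniteMeasure base
  circleSupp : base (Metric.sphere (0:ℂ) 1)ᶜ = 0
  dens : ℂ → Matrix (Fin n) (Fin n) ℂ
  dens_meas : ∀ i j, Measurable fun t => dens t i j
  dens_int : ∀ i j, Integrable (fun t => dens t i j) base
  dens_psd : ∀ᵐ t ∂base, (dens t).PosSemidef

namespace MatrixMeasure

variable {n : ℕ} (μ : MatrixMeasure n)

/-- The value of the matrix measure on a set. -/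
noncomputable def meas (A : Set ℂ) : Matrix (Fin n) (Fin n) ℂ :=
  Matrix.of fun i j => ∫ t in A, μ.dens t i j ∂μ.base

/-- The support of the matrix measure: the points all of whose neighbourhoods have
nonzero measure (equivalently, the smallest closed set of full measure). -/
def supp : Set ℂ := {x : ℂ | ∀ ε > 0, μ.meas (Metric.ball x ε) ≠ 0}

/-- The set of limit points of the support. -/
def limitPts : Set ℂ := {x : ℂ | x ∈ closure (μ.supp \ {x})}

/-- The Carathéodory function `F(z) = ∫ (t+z)/(t-z) dμ(t)` of the matrix measure. -/
noncomputable def cara (z : ℂ) : Matrix (Fin n) (Fin n) ℂ :=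
  Matrix.of fun i j => ∫ t, ((t + z) / (t - z)) * μ.dens t i j ∂μ.base

/-- The Schur function `f(z) = z⁻¹ (F(z) - 1)(F(z) + 1)⁻¹` of the matrix measure. -/
noncomputable def schur (z : ℂ) : Matrix (Fin n) (Fin n) ℂ :=
  z⁻¹ • ((μ.cara z - 1) * (μ.cara z + 1)⁻¹)

end MatrixMeasure


namespace MatrixMeasure

variable {n : ℕ} (μ : MatrixMeasure n)

theorem aux_circle : ∀ᵐ t ∂μ.base, ‖t‖ = 1 := by
  have h := μ.circleSupp
  rw [ae_iff]
  convert h using 2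
  ext t
  simp

theorem aux_sub_ge {t z : ℂ} (ht : ‖t‖ = 1) : 1 - ‖z‖ ≤ ‖t - z‖ := by
  have := norm_sub_norm_le t z
  rwa [ht] at this

theorem aux_kernel_bound {t z : ℂ} (ht : ‖t‖ = 1) (hz : ‖z‖ < 1) :
    ‖(t + z) / (t - z)‖ ≤ 2 / (1 - ‖z‖) := by
  rw [norm_div]
  have h1 := aux_sub_ge (z := z) ht
  have h2 : ‖t + z‖ ≤ 2 := by
    have := norm_add_le t z
    linarith
  gcongr

theorem aux_integrable {z : ℂ} (hz : ‖z‖ < 1) (i j : Fin n) :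
    Integrable (fun t => ((t + z) / (t - z)) * μ.dens t i j) μ.base := by
  apply Integrable.bdd_mul (μ.dens_int i j) (c := 2 / (1 - ‖z‖))
  · have : Measurable fun t : ℂ => (t + z) / (t - z) := by fun_prop
    exact this.aestronglyMeasurable
  · filter_upwards [μ.aux_circle] with t ht
    exact aux_kernel_bound ht hz

theorem aux_kernel_re {t z : ℂ} (ht : ‖t‖ = 1) (hz : ‖z‖ < 1) :
    0 ≤ ((t + z) / (t - z)).re := by
  have h1 : (t.re * t.re + t.im * t.im) = 1 := by
    have := Complex.normSq_eq_norm_sq t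
    rw [ht, Complex.normSq_apply] at this
    linarith
  have h2 : (z.re * z.re + z.im * z.im) ≤ 1 := by
    have := Complex.normSq_eq_norm_sq z
    rw [Complex.normSq_apply] at this
    nlinarith [norm_nonneg z]
  rw [Complex.div_re, ← add_div]
  apply div_nonneg _ (Complex.normSq_nonneg _)
  simp only [Complex.add_re, Complex.sub_re, Complex.add_im, Complex.sub_im]
  nlinarith

theorem aux_quad {z : ℂ} (hz : ‖z‖ < 1) (v : Fin n → ℂ) :
    0 ≤ (star v ⬝ᵥ (μ.cara z).mulVec v).re := by
  have key : star v ⬝ᵥ (μ.cara z).mulVec v =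
      ∫ t, ((t + z) / (t - z)) * (star v ⬝ᵥ (μ.dens t).mulVec v) ∂μ.base := by
    simp only [dotProduct, Matrix.mulVec, cara, Matrix.of_apply, Finset.mul_sum]
    rw [integral_finsetSum]
    · refine Finset.sum_congr rfl fun i _ => ?_
      rw [integral_finsetSum]
      · refine Finset.sum_congr rfl fun j _ => ?_
        rw [← integral_mul_const, ← integral_const_mul]
        congr 1
        ext t
        ring
      · intro j _
        refine (((μ.aux_integrable hz i j).mul_const (v j)).const_mul (star v i)).congr ?_
        exact Eventually.of_forall fun t => by ring
    · intro i _
      refine integrable_finsetSum _ fun j _ => ?_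
      refine (((μ.aux_integrable hz i j).mul_const (v j)).const_mul (star v i)).congr ?_
      exact Eventually.of_forall fun t => by ring
  have hint : Integrable (fun t => ((t + z) / (t - z)) * (star v ⬝ᵥ (μ.dens t).mulVec v))
      μ.base := by
    simp only [dotProduct, Matrix.mulVec, Finset.mul_sum]
    refine integrable_finsetSum _ fun i _ => integrable_finsetSum _ fun j _ => ?_
    refine (((μ.aux_integrable hz i j).mul_const (v j)).const_mul (star v i)).congr ?_
    exact Eventually.of_forall fun t => by ring
  rw [key]
  have h2 := integral_re hint
  simp only [RCLike.re_eq_complex_re] at h2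
  rw [← h2]
  apply integral_nonneg_of_ae
  filter_upwards [μ.aux_circle, μ.dens_psd] with t ht hp
  have h3 := hp.dotProduct_mulVec_nonneg v
  rw [Complex.le_def] at h3
  simp only [Complex.zero_re, Complex.zero_im] at h3
  simp only [Pi.zero_apply, Complex.mul_re, ← h3.2, mul_zero, sub_zero]
  exact mul_nonneg (aux_kernel_re ht hz) h3.1

theorem aux_isUnit {z : ℂ} (hz : ‖z‖ < 1) : IsUnit (μ.cara z + 1).det := by
  rw [isUnit_iff_ne_zero]
  intro h
  obtain ⟨v, hv0, hv⟩ := Matrix.exists_mulVec_eq_zero_iff.mpr h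
  have h1 := μ.aux_quad hz v
  have h2 : star v ⬝ᵥ (μ.cara z + 1).mulVec v = 0 := by rw [hv]; simp
  rw [Matrix.add_mulVec, Matrix.one_mulVec, dotProduct_add] at h2
  have h3 : 0 < star v ⬝ᵥ v := Matrix.dotProduct_star_self_pos_iff.mpr hv0
  rw [Complex.lt_def] at h3
  have h4 := congrArg Complex.re h2
  simp only [Complex.add_re, Complex.zero_re] at h4 h3
  linarith [h3.1]

theorem aux_inverse {z : ℂ} (hz : ‖z‖ < 1) (hz0 : z ≠ 0) :
    (1 - z • μ.schur z) * (μ.cara z + 1) = (2 : ℂ) • 1 ∧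
    (μ.cara z + 1) * (1 - z • μ.schur z) = (2 : ℂ) • 1 := by
  have hu := μ.aux_isUnit hz
  have h1 : (1 - z • μ.schur z) * (μ.cara z + 1) = (2 : ℂ) • 1 := by
    rw [schur, smul_inv_smul₀ hz0, Matrix.sub_mul, Matrix.mul_assoc,
      Matrix.nonsing_inv_mul _ hu, Matrix.one_mul, Matrix.mul_one, two_smul]
    abel
  refine ⟨h1, ?_⟩
  have h2 : ((2 : ℂ)⁻¹ • (1 - z • μ.schur z)) * (μ.cara z + 1) = 1 := by
    rw [Matrix.smul_mul, h1, inv_smul_smul₀ two_ne_zero]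
  have h3 := mul_eq_one_comm.mp h2
  rw [Matrix.mul_smul] at h3
  exact (inv_smul_eq_iff₀ two_ne_zero).mp h3

theorem aux_limit (lam : ℂ) (hlam : ‖lam‖ = 1) :
    Tendsto (fun r : ℝ => ((1 - r : ℝ) : ℂ) • (μ.cara (r * lam) + 1)) (nhdsWithin 1 (Iio 1))
      (nhds ((2 : ℂ) • μ.meas {lam})) := by
  have hr : Tendsto (fun r : ℝ => ((1 - r : ℝ) : ℂ)) (nhdsWithin 1 (Iio 1)) (nhds 0) := by
    have : Continuous (fun r : ℝ => ((1 - r : ℝ) : ℂ)) := by fun_prop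
    have h := this.tendsto 1
    simp only [sub_self, Complex.ofReal_zero] at h
    exact h.mono_left nhdsWithin_le_nhds
  have hmain : Tendsto (fun r : ℝ => ((1 - r : ℝ) : ℂ) • μ.cara (r * lam))
      (nhdsWithin 1 (Iio 1)) (nhds ((2 : ℂ) • μ.meas {lam})) := by
    refine tendsto_pi_nhds.mpr fun i => tendsto_pi_nhds.mpr fun j => ?_
    have e1 : ∀ r : ℝ, (((1 - r : ℝ) : ℂ) • μ.cara (r * lam)) i j =
        ∫ t, (((1 - r : ℝ) : ℂ) * ((t + r * lam) / (t - r * lam))) * μ.dens t i j ∂μ.base := by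
      intro r
      simp only [Matrix.smul_apply, cara, Matrix.of_apply, smul_eq_mul]
      rw [← integral_const_mul]
      simp only [mul_assoc]
    have e2 : ((2 : ℂ) • μ.meas {lam}) i j =
        ∫ t, ({lam} : Set ℂ).indicator (fun t => 2 * μ.dens t i j) t ∂μ.base := by
      rw [integral_indicator (measurableSet_singleton lam), integral_const_mul]
      rfl
    simp only [e1]
    rw [e2]
    apply tendsto_integral_filter_of_dominated_convergence (fun t => 2 * ‖μ.dens t i j‖)
    · refine Eventually.of_forall fun r => ?_
      have := μ.dens_meas i j
      apply Measurable.aestronglyMeasurable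
      fun_prop
    · have hpos : ∀ᶠ r : ℝ in nhdsWithin 1 (Iio 1), 0 < r :=
        nhdsWithin_le_nhds (lt_mem_nhds one_pos)
      filter_upwards [hpos, self_mem_nhdsWithin] with r h0 h1
      have h1' : r < 1 := h1
      filter_upwards [μ.aux_circle] with t ht
      rw [norm_mul]
      gcongr
      have hn : ‖(r : ℂ) * lam‖ = r := by
        rw [norm_mul, hlam, mul_one, Complex.norm_real, Real.norm_of_nonneg h0.le]
      have hb := aux_kernel_bound (z := r * lam) ht (by rw [hn]; exact h1)
      rw [hn] at hb
      rw [norm_mul, Complex.norm_real, Real.norm_of_nonneg (by linarith)]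
      calc (1 - r) * _ ≤ (1 - r) * (2 / (1 - r)) := by
            apply mul_le_mul_of_nonneg_left hb; linarith
        _ = 2 := by field_simp [(by linarith : (1 - r) ≠ 0)]
    · exact (μ.dens_int i j).norm.const_mul 2
    · refine Eventually.of_forall fun t => ?_
      by_cases ht : t = lam
      · subst ht
        simp only [mem_singleton_iff, indicator_of_mem]
        have hc : Tendsto (fun r : ℝ => (1 + (r : ℂ)) * μ.dens t i j)
            (nhdsWithin 1 (Iio 1)) (nhds (2 * μ.dens t i j)) := by
          have : Continuous (fun r : ℝ => (1 + (r : ℂ)) * μ.dens t i j) := by fun_prop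
          have h := this.tendsto 1
          simp only [Complex.ofReal_one, one_add_one_eq_two] at h
          exact h.mono_left nhdsWithin_le_nhds
        refine hc.congr' ?_
        filter_upwards [self_mem_nhdsWithin] with r h1
        have h1' : r < 1 := h1
        have ht0 : t ≠ 0 := by
          rintro rfl
          simp at hlam
        have hne : (1 - (r : ℂ)) ≠ 0 := by
          rw [sub_ne_zero]
          exact_mod_cast h1'.ne'
        congr 1
        have e3 : t - r * t = (1 - r) * t := by ring
        have e4 : t + r * t = (1 + r) * t := by ring
        rw [e3, e4]
        push_cast
        field_simp
      · rw [indicator_of_notMem (by simpa using ht)]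
        have hq : Tendsto (fun r : ℝ => (t + r * lam) / (t - r * lam))
            (nhdsWithin 1 (Iio 1)) (nhds ((t + (1 : ℝ) * lam) / (t - (1 : ℝ) * lam))) := by
          apply Tendsto.mono_left _ nhdsWithin_le_nhds
          apply Tendsto.div
          · exact (by fun_prop : Continuous fun r : ℝ => t + r * lam).tendsto 1
          · exact (by fun_prop : Continuous fun r : ℝ => t - r * lam).tendsto 1
          · simpa [sub_eq_zero] using ht
        have := (hr.mul hq).mul_const (μ.dens t i j)
        simpa using this
  have h1 := hmain.add (hr.smul_const (1 : Matrix (Fin n) (Fin n) ℂ))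
  simpa only [smul_add, zero_smul, add_zero] using h1

theorem aux_main (lam : ℂ) (hlam : ‖lam‖ = 1)
    (U : Set ℂ) (g : ℂ → Matrix (Fin n) (Fin n) ℂ)
    (hU : IsOpen U) (hlamU : lam ∈ U)
    (hg : ∀ i j, AnalyticOnNhd ℂ (fun z => g z i j) U)
    (hagree : ∀ z ∈ U, ‖z‖ < 1 → z ≠ 0 → g z = μ.schur z) :
    LinearMap.range (μ.meas {lam}).mulVecLin =
        LinearMap.ker (1 - lam • g lam).mulVecLin := by
  have hlam0 : lam ≠ 0 := by
    rintro rfl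
    simp at hlam
  set G : ℝ → Matrix (Fin n) (Fin n) ℂ := fun r => 1 - ((r : ℂ) * lam) • g (r * lam) with hG
  have hG1 : G 1 = 1 - lam • g lam := by simp [hG]
  have hlim := μ.aux_limit lam hlam
  have hinv : ∀ᶠ r : ℝ in nhdsWithin 1 (Iio 1),
      G r * (μ.cara (r * lam) + 1) = (2 : ℂ) • 1 ∧
      (μ.cara (r * lam) + 1) * G r = (2 : ℂ) • 1 := by
    have hpos : ∀ᶠ r : ℝ in nhdsWithin 1 (Iio 1), 0 < r :=
      nhdsWithin_le_nhds (lt_mem_nhds one_pos)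
    have hmem : ∀ᶠ r : ℝ in nhdsWithin 1 (Iio 1), (r : ℂ) * lam ∈ U := by
      apply nhdsWithin_le_nhds
      have : Continuous fun r : ℝ => (r : ℂ) * lam := by fun_prop
      exact this.continuousAt.preimage_mem_nhds (hU.mem_nhds (by simpa using hlamU))
    filter_upwards [hpos, hmem, self_mem_nhdsWithin] with r h0 hm h1
    have h1' : r < 1 := h1
    have hn : ‖(r : ℂ) * lam‖ < 1 := by
      rw [norm_mul, hlam, mul_one, Complex.norm_real, Real.norm_of_nonneg h0.le]
      exact h1'
    have hne : (r : ℂ) * lam ≠ 0 := mul_ne_zero (by exact_mod_cast h0.ne') hlam0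
    have := μ.aux_inverse hn hne
    simp only [hG]
    rw [hagree _ hm hn hne]
    exact this
  have hd : ∀ i j, DifferentiableAt ℝ (fun r => G r i j) 1 := by
    intro i j
    have h1 : DifferentiableAt ℂ (fun z => g z i j) (((1 : ℝ) : ℂ) * lam) := by
      simpa using (hg i j lam hlamU).differentiableAt
    have h2 : DifferentiableAt ℝ (fun r : ℝ => (r : ℂ) * lam) 1 :=
      (Complex.ofRealCLM.differentiableAt).mul_const lam
    have h3 : DifferentiableAt ℝ (fun r : ℝ => g ((r : ℂ) * lam) i j) 1 :=
      DifferentiableAt.comp (g := fun z => g z i j) (1 : ℝ) (h1.restrictScalars ℝ) h2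
    simp only [hG, Matrix.sub_apply, Matrix.smul_apply, smul_eq_mul]
    exact (h2.mul h3).const_sub _
  have hcont : Tendsto G (nhdsWithin 1 (Iio 1)) (nhds (G 1)) := by
    apply Tendsto.mono_left _ nhdsWithin_le_nhds
    refine tendsto_pi_nhds.mpr fun i => tendsto_pi_nhds.mpr fun j => ?_
    exact (hd i j).continuousAt
  have hr : Tendsto (fun r : ℝ => ((1 - r : ℝ) : ℂ)) (nhdsWithin 1 (Iio 1)) (nhds 0) := by
    have : Continuous (fun r : ℝ => ((1 - r : ℝ) : ℂ)) := by fun_prop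
    have h := this.tendsto 1
    simp only [sub_self, Complex.ofReal_zero] at h
    exact h.mono_left nhdsWithin_le_nhds
  rw [← hG1]
  apply le_antisymm
  · have hprod : Tendsto (fun r : ℝ => G r * (((1 - r : ℝ) : ℂ) • (μ.cara (r * lam) + 1)))
        (nhdsWithin 1 (Iio 1)) (nhds (G 1 * ((2 : ℂ) • μ.meas {lam}))) := hcont.mul hlim
    have hprod0 : Tendsto (fun r : ℝ => G r * (((1 - r : ℝ) : ℂ) • (μ.cara (r * lam) + 1)))
        (nhdsWithin 1 (Iio 1)) (nhds ((0 : ℂ) • ((2 : ℂ) • 1))) := by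
      refine (hr.smul_const ((2 : ℂ) • (1 : Matrix (Fin n) (Fin n) ℂ))).congr' ?_
      filter_upwards [hinv] with r h
      rw [Matrix.mul_smul, h.1]
    have h0 := tendsto_nhds_unique hprod hprod0
    rw [zero_smul, Matrix.mul_smul, smul_eq_zero_iff_right two_ne_zero] at h0
    rintro _ ⟨w, rfl⟩
    rw [LinearMap.mem_ker, Matrix.mulVecLin_apply, Matrix.mulVecLin_apply,
      Matrix.mulVec_mulVec, h0, Matrix.zero_mulVec]
  · intro v hv
    rw [LinearMap.mem_ker, Matrix.mulVecLin_apply] at hv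
    have hdv : DifferentiableAt ℝ (fun r => (G r).mulVec v) 1 := by
      rw [differentiableAt_pi]
      intro i
      simp only [Matrix.mulVec, dotProduct]
      apply DifferentiableAt.fun_sum
      intro j _
      exact (hd i j).mul_const _
    set w := deriv (fun r => (G r).mulVec v) 1 with hw
    have hs : Tendsto (slope (fun r => (G r).mulVec v) 1) (nhdsWithin 1 (Iio 1)) (nhds w) :=
      (hasDerivAt_iff_tendsto_slope.mp hdv.hasDerivAt).mono_left
        (nhdsWithin_mono _ fun r h => ne_of_lt h)
    have hcm : Continuous fun p : Matrix (Fin n) (Fin n) ℂ × (Fin n → ℂ) => p.1.mulVec p.2 :=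
      Continuous.matrix_mulVec continuous_fst continuous_snd
    have hprod := (hcm.tendsto ((2 : ℂ) • μ.meas {lam}, w)).comp (hlim.prodMk_nhds hs)
    have hconst : Tendsto (fun _ : ℝ => -((2 : ℂ) • v)) (nhdsWithin 1 (Iio 1))
        (nhds (-((2 : ℂ) • v))) := tendsto_const_nhds
    have heq := tendsto_nhds_unique hprod (hconst.congr' (by
      filter_upwards [hinv, self_mem_nhdsWithin] with r h h1
      have h1' : r < 1 := h1
      have hne : ((r - 1 : ℝ) : ℂ) ≠ 0 := by
        exact_mod_cast (by linarith : r - 1 ≠ 0)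
      simp only [Function.comp_apply, slope, vsub_eq_sub]
      rw [hv, sub_zero, ← Complex.coe_smul, Matrix.mulVec_smul, Matrix.smul_mulVec,
        Matrix.mulVec_mulVec, h.2, Matrix.smul_mulVec, Matrix.one_mulVec, smul_smul,
        ← neg_one_smul ℂ ((2 : ℂ) • v)]
      congr 1
      have : r - 1 ≠ 0 := by linarith
      rw [← Complex.ofReal_mul]
      have e : (r - 1)⁻¹ * (1 - r) = -1 := by
        field_simp
        ring
      rw [e]
      simp))
    refine ⟨-w, ?_⟩
    simp only [Matrix.smul_mulVec] at heq
    rw [Matrix.mulVecLin_apply, Matrix.mulVec_neg, neg_eq_iff_eq_neg]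
    rw [← smul_neg] at heq
    exact smul_right_injective _ (two_ne_zero (α := ℂ)) heq

end MatrixMeasure

/-- For a normalized matrix measure `μ` on the unit circle with Schur
function `f` (analytically continued through `𝕋 \ (supp μ)'` by a local analytic
extension `g`), the isolated mass points of `μ` are exactly the zeros of
`det (1 - z f(z))` lying on `𝕋 \ (supp μ)'`, and at such a point `λ` one has
`range μ({λ}) = ker (1 - λ f(λ))`. -/
theorem statement1 {n : ℕ} (μ : MatrixMeasure n) (hnorm : μ.meas Set.univ = 1)
    (lam : ℂ) (hlam : lam ∈ Metric.sphere (0:ℂ) 1) (hnotlp : lam ∉ μ.limitPts)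
    (U : Set ℂ) (g : ℂ → Matrix (Fin n) (Fin n) ℂ)
    (hU : IsOpen U) (hlamU : lam ∈ U)
    (hg : ∀ i j, AnalyticOnNhd ℂ (fun z => g z i j) U)
    (hagree : ∀ z ∈ U, ‖z‖ < 1 → z ≠ 0 → g z = μ.schur z) :
    (μ.meas {lam} ≠ 0 ↔ Matrix.det (1 - lam • g lam) = 0) ∧
    (μ.meas {lam} ≠ 0 →
      LinearMap.range (μ.meas {lam}).mulVecLin =
        LinearMap.ker (1 - lam • g lam).mulVecLin) := by
  have h := μ.aux_main lam (by simpa using hlam) U g hU hlamU hg hagree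
  refine ⟨?_, fun _ => h⟩
  have h1 : μ.meas {lam} = 0 ↔ LinearMap.range (μ.meas {lam}).mulVecLin = ⊥ := by
    rw [LinearMap.range_eq_bot]
    constructor
    · intro h; rw [h]; ext; simp
    · intro h
      exact Matrix.toLin'.injective (by rw [Matrix.toLin'_apply', h, map_zero])
  rw [Ne, h1, h, ← Matrix.exists_mulVec_eq_zero_iff, ← Ne, Submodule.ne_bot_iff]
  simp only [LinearMap.mem_ker, Matrix.mulVecLin_apply]
  constructor
  · rintro ⟨v, a, b⟩; exact ⟨v, b, a⟩
  · rintro ⟨v, a, b⟩; exact ⟨v, b, a⟩
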